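/- Let p be a prime, SNR > 0 and ε ∈ ℝ. Let X be a random variable uniformly distributed over the constellation Λ_p, let f be an integer with 1 ≤ f ≤ p−1, and let r be an integer with 2 ≤ r ≤ p−1. Define U = ( f·X + ε·X − ε·(r·X)* )*. Then 𝔼[exp(−(SNR/8)·U²)] ≤ (p−1)/p + (1/p)·exp( −(3·SNR/(2p²))·( ε mod [−1/4,1/4) )² ). -/

import Mathlib

open MeasureTheory ProbabilityTheory Real Filter
open scoped ENNReal

noncomputable section

/-- Reduction of `x` modulo the half-open interval `[a, b)`. -/
def modIco (a b x : ℝ) : ℝ := a + (b - a) * Int.fract ((x - a) / (b - a))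

/-- `L = √12`. -/
def Lc : ℝ := Real.sqrt 12

/-- `x*`: reduction of `x` modulo the basic interval `I = [-L/2, L/2)`. -/
def starI (x : ℝ) : ℝ := modIco (-(Lc / 2)) (Lc / 2) x

/-- `δ(p, γ) = min_{l ∈ {1,…,p−1}} |l·γ − ⌊l·γ⌉|`. -/
def deltaP (p : ℕ) (γ : ℝ) : ℝ :=
  sInf {d : ℝ | ∃ l : ℕ, 1 ≤ l ∧ l ≤ p - 1 ∧ d = |(l : ℝ) * γ - round ((l : ℝ) * γ)|}

/-- The set `P'(γ)` of admissible primes (depends on the SNR). -/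
def Pgood (SNR : ℝ) (γ : ℝ) : Set ℕ :=
  {p | p.Prime ∧
    Real.exp (-(3 * SNR / (2 * (p : ℝ) ^ 2)) * (modIco (-(1/4)) (1/4) γ) ^ 2) <
      1 - 2 * (p : ℝ) * Real.exp (-(3 * SNR / 8))}

/-- First rate expression in the achievable-rate theorem. -/
def rateA (SNR : ℝ) (p : ℕ) (γ : ℝ) : ℝ :=
  -(1/2) * Real.logb 2 (1/(p : ℝ)^2 + Real.sqrt (2 * π / (3 * SNR))
    + (1/(p : ℝ)) * Real.exp (-(3 * SNR / (2 * (p : ℝ)^2)) * (deltaP p γ)^2)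
    + 2 * Real.exp (-(3 * SNR / 8)))

/-- Second rate expression in the achievable-rate theorem. -/
def rateB (SNR : ℝ) (p : ℕ) (γ : ℝ) : ℝ :=
  -Real.logb 2 (1/(p : ℝ) + Real.sqrt (2 * π / (3 * (deltaP p γ)^2 * SNR))
    + 2 * Real.exp (-(3 * SNR / 8)))

/-- The `k`-th point of the constellation `Λ_p`. -/
def constPt (p : ℕ) (k : ℕ) : ℝ := starI (Lc / (p : ℝ) * (k : ℝ))

/-- The constellation `Λ_p` as a finite set of reals. -/
def constSet (p : ℕ) : Finset ℝ := (Finset.range p).image (constPt p)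

/-- The uniform probability measure on the constellation `Λ_p`. -/
def uniformConst (p : ℕ) : Measure ℝ :=
  (p : ℝ≥0∞)⁻¹ • ∑ k ∈ Finset.range p, Measure.dirac (constPt p k)


lemma Lc_pos : 0 < Lc := by unfold Lc; positivity

lemma starI_eq (x : ℝ) : ∃ j : ℤ, starI x = x - Lc * j := by
  have h := Lc_pos
  refine ⟨⌊(x + Lc/2)/Lc⌋, ?_⟩
  unfold starI modIco
  have e : (x - -(Lc/2)) / (Lc/2 - -(Lc/2)) = (x + Lc/2)/Lc := by congr 1 <;> ring
  rw [e, Int.fract]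
  field_simp
  ring

lemma starI_of (x y : ℝ) (j : ℤ) (h : x = y + Lc * j) (h1 : -(Lc/2) ≤ y) (h2 : y < Lc/2) :
    starI x = y := by
  have hL := Lc_pos
  unfold starI modIco
  have e : (x - -(Lc/2)) / (Lc/2 - -(Lc/2)) = (y + Lc/2)/Lc + j := by
    rw [h]; field_simp; ring
  rw [e, Int.fract_add_intCast, Int.fract_eq_self.2]
  · field_simp; ring
  · constructor
    · apply div_nonneg <;> linarith
    · rw [div_lt_one hL]; linarith

lemma starI_lattice (p : ℕ) (hp : 0 < p) (a b j : ℤ) (h : a = b + p * j)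
    (h1 : -(p:ℤ) ≤ 2 * b) (h2 : 2 * b < p) : starI (Lc / p * a) = Lc / p * b := by
  have hL := Lc_pos
  have hp' : (0:ℝ) < p := by exact_mod_cast hp
  have h1' : -(p:ℝ) ≤ 2 * b := by exact_mod_cast h1
  have h2' : 2 * (b:ℝ) < p := by exact_mod_cast h2
  apply starI_of _ _ j
  · rw [h]; push_cast; field_simp
  · rw [div_mul_eq_mul_div, le_div_iff₀ hp']; nlinarith
  · rw [div_mul_eq_mul_div, div_lt_iff₀ hp']; nlinarith

lemma mod_quarter (ε : ℝ) : ∃ k : ℤ, modIco (-(1/4)) (1/4) ε = ε - k / 2 ∧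
    |modIco (-(1/4)) (1/4) ε| ≤ 1/4 := by
  refine ⟨⌊(ε - -(1/4))/(1/4 - -(1/4))⌋, ?_, ?_⟩
  · unfold modIco; rw [Int.fract]; ring
  · unfold modIco
    have a := Int.fract_nonneg ((ε - -(1/4))/(1/4 - -(1/4)))
    have b := Int.fract_lt_one ((ε - -(1/4))/(1/4 - -(1/4)))
    rw [abs_le]; constructor <;> linarith

lemma core (ε : ℝ) (N : ℤ) (c : ℤ) (hc : c = 1 ∨ c = 2) :
    |modIco (-(1/4)) (1/4) ε| ≤ |(N:ℝ) + c * ε| := by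
  obtain ⟨k, hk, hb⟩ := mod_quarter ε
  set e := modIco (-(1/4)) (1/4) ε
  have he : ε = e + k / 2 := by linarith
  have key : ∃ M : ℤ, (N:ℝ) + c * ε = M / 2 + c * e ∧ (c = 2 → ∃ K, M = 2 * K) := by
    refine ⟨2 * N + c * k, ?_, ?_⟩
    · rw [he]; push_cast; ring
    · rintro rfl; exact ⟨N + k, by ring⟩
  obtain ⟨M, hM, hM2⟩ := key
  rw [hM]
  have hb' := abs_le.1 hb
  rcases hc with rfl | rfl
  · rcases lt_trichotomy M 0 with h | rfl | h
    · have : (M:ℝ) ≤ -1 := by exact_mod_cast (by omega : M ≤ -1)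
      refine hb.trans ?_
      rw [le_abs]; right; push_cast; linarith
    · simp
    · have : (1:ℝ) ≤ M := by exact_mod_cast h
      refine hb.trans ?_
      rw [le_abs]; left; push_cast; linarith
  · obtain ⟨K, rfl⟩ := hM2 rfl
    rcases lt_trichotomy K 0 with h | rfl | h
    · have : (K:ℝ) ≤ -1 := by exact_mod_cast (by omega : K ≤ -1)
      refine hb.trans ?_
      rw [le_abs]; right; push_cast; linarith
    · simp [abs_mul]; linarith [abs_nonneg e]
    · have : (1:ℝ) ≤ K := by exact_mod_cast h
      refine hb.trans ?_
      rw [le_abs]; left; push_cast; linarith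

lemma star_bound (p : ℕ) (hp : 0 < p) (ε : ℝ) (n c : ℤ) (hc : c = 1 ∨ c = 2) :
    12 / (p:ℝ)^2 * (modIco (-(1/4)) (1/4) ε)^2 ≤ (starI (Lc / p * (n + c * ε)))^2 := by
  have hp' : (0:ℝ) < p := by exact_mod_cast hp
  obtain ⟨j, hj⟩ := starI_eq (Lc / p * (n + c * ε))
  have h := sq_le_sq.2 (core ε (n - p * j) c hc)
  have hL : Lc ^ 2 = 12 := by unfold Lc; norm_num
  have e : starI (Lc / p * (n + c * ε)) = Lc / p * (((n - p * j : ℤ) : ℝ) + c * ε) := by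
    rw [hj]; push_cast; field_simp; ring
  rw [e, mul_pow, div_pow, hL]
  gcongr

/-- The good constellation point. -/
lemma exists_point (p : ℕ) (hp : p.Prime) (r : ℕ) (hr1 : 2 ≤ r) (hr2 : r ≤ p - 1) :
    ∃ k < p, ∃ m s c : ℤ, constPt p k = Lc / p * m ∧ starI (r * (Lc / p * m)) = Lc / p * s ∧
      m - s = c ∧ (c = 1 ∨ c = 2) := by
  have hp0 := hp.pos
  have hlat : ∀ m a : ℤ, (r:ℝ) * (Lc / p * m) = Lc / p * ((r * m : ℤ) : ℝ) := by
    intro m a; push_cast; ring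
  have hc : ∀ k : ℕ, constPt p k = starI (Lc / p * ((k:ℤ):ℝ)) := by
    intro k; simp [constPt]
  by_cases hr : r = p - 1
  · refine ⟨1, by omega, 1, -1, 2, ?_, ?_, by norm_num, by norm_num⟩
    · rw [hc]; exact starI_lattice p hp0 _ _ 0 (by simp) (by omega) (by omega)
    · rw [hlat _ 0]
      exact starI_lattice p hp0 _ _ 1 (by omega) (by omega) (by omega)
  · haveI : Fact p.Prime := ⟨hp⟩
    have hne : (1 - (r:ZMod p)) ≠ 0 := by
      intro h
      have h2 : ((r - 1 : ℕ) : ZMod p) = 0 := by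
        rw [Nat.cast_sub (by omega)]; push_cast; linear_combination -h
      rw [ZMod.natCast_eq_zero_iff] at h2
      have := Nat.le_of_dvd (by omega) h2
      omega
    set z : ZMod p := (1 - (r:ZMod p))⁻¹
    have hz : z * (1 - (r:ZMod p)) = 1 := inv_mul_cancel₀ hne
    have hk : z.val < p := ZMod.val_lt z
    have hkz : ((z.val : ℕ) : ZMod p) = z := ZMod.natCast_zmod_val z
    -- symmetric representative
    obtain ⟨m, j, hm, hm1, hm2⟩ : ∃ m j : ℤ, (z.val : ℤ) = m + p * j ∧
        -(p:ℤ) ≤ 2 * m ∧ 2 * m < p := by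
      by_cases h : 2 * z.val < p
      · exact ⟨z.val, 0, by simp, by omega, by omega⟩
      · exact ⟨z.val - p, 1, by ring, by omega, by omega⟩
    have hmz : (m : ZMod p) = z := by
      have := congrArg (Int.cast : ℤ → ZMod p) hm
      push_cast at this
      rw [hkz] at this
      simpa using this.symm
    have hdvd : (p:ℤ) ∣ r * m - (m - 1) := by
      rw [← ZMod.intCast_zmod_eq_zero_iff_dvd]
      push_cast
      rw [hmz]; linear_combination -hz
    have hlow : -(p:ℤ) ≤ 2 * (m - 1) := by
      by_contra hcon
      have hcase : 2 * m = -p ∨ 2 * m = 1 - p := by omega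
      have h2m : (p:ℤ) ∣ 2 * (r * m - (m-1)) := hdvd.mul_left 2
      rcases hcase with h | h
      · have : (p:ℤ) ∣ 2 := by
          have e : 2 * (r * m - (m-1)) = p * (1 - r) + 2 := by linear_combination (r - 1 : ℤ) * h
          rw [e] at h2m
          exact (Int.dvd_add_right ⟨_, rfl⟩).1 h2m
        have := Int.le_of_dvd (by norm_num) this
        omega
      · have : (p:ℤ) ∣ r + 1 := by
          have e : 2 * (r * m - (m-1)) = p * (1 - r) + (r + 1) := by
            linear_combination (r - 1 : ℤ) * h
          rw [e] at h2m
          exact (Int.dvd_add_right ⟨_, rfl⟩).1 h2m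
        have := Int.le_of_dvd (by omega) this
        omega
    obtain ⟨t, ht⟩ := hdvd
    refine ⟨z.val, hk, m, m - 1, 1, ?_, ?_, by ring, Or.inl rfl⟩
    · rw [hc]; exact starI_lattice p hp0 _ _ j hm hm1 hm2
    · rw [hlat _ 0]
      exact starI_lattice p hp0 _ _ t (by linarith) hlow (by omega)

lemma measurable_starI : Measurable starI := by
  unfold starI modIco
  fun_prop

/-- **Lemma 6.** For `X` uniform on `Λ_p`, `f ∈ {1,…,p−1}`, `r ∈ {2,…,p−1}` and
`U = (f·X + ε·X − ε·(r·X)*)*`, one has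
`𝔼[exp(−(SNR/8)·U²)] ≤ (p−1)/p + (1/p)·exp(−(3·SNR/(2p²))·(ε mod [−1/4,1/4))²)`. -/
theorem lemma_expectation_case_d4
    (p : ℕ) (hp : p.Prime) (SNR : ℝ) (hSNR : 0 < SNR) (ε : ℝ)
    (f : ℕ) (hf1 : 1 ≤ f) (hf2 : f ≤ p - 1)
    (r : ℕ) (hr1 : 2 ≤ r) (hr2 : r ≤ p - 1)
    (Ω : Type) (_ : MeasurableSpace Ω) (μ : Measure Ω) [IsProbabilityMeasure μ]
    (X : Ω → ℝ) (hX : Measurable X)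
    (hXunif : Measure.map X μ = uniformConst p) :
    ∫ ω, Real.exp (-(SNR / 8) *
        (starI ((f : ℝ) * X ω + ε * X ω - ε * starI ((r : ℝ) * X ω))) ^ 2) ∂μ
      ≤ ((p : ℝ) - 1) / (p : ℝ)
        + (1 / (p : ℝ)) * Real.exp (-(3 * SNR / (2 * (p : ℝ) ^ 2))
            * (modIco (-(1/4)) (1/4) ε) ^ 2) := by
  have hp0 : (0:ℝ) < p := by exact_mod_cast hp.pos
  set g : ℝ → ℝ := fun x => Real.exp (-(SNR / 8) *
        (starI ((f : ℝ) * x + ε * x - ε * starI ((r : ℝ) * x))) ^ 2) with hg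
  have hgm : Measurable g := by
    have := measurable_starI
    fun_prop
  have hg1 : ∀ x, g x ≤ 1 := by
    intro x
    rw [hg]
    apply Real.exp_le_one_iff.2
    have := sq_nonneg (starI ((f : ℝ) * x + ε * x - ε * starI ((r : ℝ) * x)))
    nlinarith
  have hint : ∫ ω, g (X ω) ∂μ = (1 / (p:ℝ)) * ∑ k ∈ Finset.range p, g (constPt p k) := by
    rw [← integral_map hX.aemeasurable hgm.aestronglyMeasurable, hXunif, uniformConst,
      integral_smul_measure, integral_finset_sum_measure]
    · simp [integral_dirac]
    · intro i _
      exact integrable_dirac (by simp)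
  change ∫ ω, g (X ω) ∂μ ≤ _
  rw [hint]
  obtain ⟨k, hk, m, s, c, h1, h2, h3, h4⟩ := exists_point p hp r hr1 hr2
  have hgk : g (constPt p k) ≤ Real.exp (-(3 * SNR / (2 * (p : ℝ) ^ 2))
            * (modIco (-(1/4)) (1/4) ε) ^ 2) := by
    rw [hg]
    apply Real.exp_le_exp.2
    rw [h1, h2]
    have e : (f:ℝ) * (Lc / p * m) + ε * (Lc / p * m) - ε * (Lc / p * s)
        = Lc / p * (((f * m : ℤ) : ℝ) + c * ε) := by
      rw [← h3]; push_cast; ring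
    rw [e]
    have hb := star_bound p hp.pos ε (f * m) c h4
    have e2 : -(3 * SNR / (2 * (p : ℝ) ^ 2)) * (modIco (-(1/4)) (1/4) ε) ^ 2
        = -(SNR / 8) * (12 / (p:ℝ)^2 * (modIco (-(1/4)) (1/4) ε)^2) := by
      generalize modIco (-(1/4)) (1/4) ε = e0; field_simp; ring
    rw [e2]
    exact mul_le_mul_of_nonpos_left hb (by linarith)
  have hsum : ∑ i ∈ Finset.range p, g (constPt p i) ≤ ((p:ℝ) - 1) + g (constPt p k) := by
    rw [← Finset.sum_erase_add _ _ (Finset.mem_range.2 hk)]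
    gcongr
    calc _ ≤ ∑ i ∈ (Finset.range p).erase k, (1:ℝ) := Finset.sum_le_sum fun i _ => hg1 _
      _ = (p:ℝ) - 1 := by
        rw [Finset.sum_const, Finset.card_erase_of_mem (Finset.mem_range.2 hk)]
        simp [Nat.cast_sub hp.one_le]
  calc _ ≤ (1 / (p:ℝ)) * (((p:ℝ) - 1) + Real.exp (-(3 * SNR / (2 * (p : ℝ) ^ 2))
            * (modIco (-(1/4)) (1/4) ε) ^ 2)) := by gcongr; linarith
    _ = _ := by ring
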